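/- arXiv:2411.19516 — 2 statements merged into one kernel-verified Lean document; each statement's English description precedes it below -/
import Mathlib

section
/- Let A ∈ ℝ^{m×2} be a matrix with two columns that has no elimination ordering. Then there exists b ∈ ℝ^m such that the solution graph of the integer linear system (A,b) over D = {0,...,d} is not connected. -/
open Finset

/-- A matrix can be eliminated at column `j` if either every row with a positive
entry in column `j` vanishes outside column `j`, or every row with a negative
entry in column `j` vanishes outside column `j`. -/
def CanElim {m : ℕ} {ι : Type} (A : Matrix (Fin m) ι ℝ) (j : ι) : Prop :=
  (∀ i, 0 < A i j → ∀ j', j' ≠ j → A i j' = 0) ∨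
  (∀ i, A i j < 0 → ∀ j', j' ≠ j → A i j' = 0)

/-- The matrix obtained from `A` by zeroing out the columns in `J`. -/
def elimCols {m n : ℕ} (A : Matrix (Fin m) (Fin n) ℝ) (J : Finset (Fin n)) :
    Matrix (Fin m) (Fin n) ℝ :=
  fun i j => if j ∈ J then 0 else A i j

/-- `A` has an elimination ordering: an enumeration `σ 0, σ 1, …` of the columns such
that at each step, the matrix with the previously processed columns zeroed out can be
eliminated at the next column. -/
def HasEO {m n : ℕ} (A : Matrix (Fin m) (Fin n) ℝ) : Prop :=
  ∃ σ : Equiv.Perm (Fin n), ∀ t : Fin n,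
    CanElim (elimCols A ((Finset.univ.filter (fun t' => t' < t)).image σ)) (σ t)

/-- `x` has all coordinates in `D = {0,…,d}`. -/
def InD (d : ℕ) {ι : Type} (x : ι → ℤ) : Prop := ∀ j, 0 ≤ x j ∧ x j ≤ (d : ℤ)

/-- `x ∈ D^ι` is a feasible solution of the integer linear system `(A, b)`. -/
def Feas (d : ℕ) {m : ℕ} {ι : Type} [Fintype ι] (A : Matrix (Fin m) ι ℝ)
    (b : Fin m → ℝ) (x : ι → ℤ) : Prop :=
  InD d x ∧ ∀ i, b i ≤ ∑ j, A i j * (x j : ℝ)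

/-- Adjacency in the solution graph: both endpoints feasible and Hamming distance 1. -/
def SolStep (d : ℕ) {m : ℕ} {ι : Type} [Fintype ι] [DecidableEq ι]
    (A : Matrix (Fin m) ι ℝ) (b : Fin m → ℝ) (u v : ι → ℤ) : Prop :=
  Feas d A b u ∧ Feas d A b v ∧ hammingDist u v = 1

/-- The solution graph of `(A, b)` is connected. -/
def SolConnected (d : ℕ) {m : ℕ} {ι : Type} [Fintype ι] [DecidableEq ι]
    (A : Matrix (Fin m) ι ℝ) (b : Fin m → ℝ) : Prop :=
  ∀ x y, Feas d A b x → Feas d A b y → Relation.ReflTransGen (SolStep d A b) x y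

theorem aux_disc (d m : ℕ) (A : Matrix (Fin m) (Fin 2) ℝ) (b : Fin m → ℝ) (P Q : Fin 2 → ℤ)
    (hP : Feas d A b P) (hQ : Feas d A b Q) (hP0 : P 0 ≠ 0) (hQ0 : Q 0 = 0)
    (H0 : ∀ u, Feas d A b u → u 0 = 0 → u 1 ≠ P 1)
    (H1 : ∀ u, Feas d A b u → u 0 ≠ 0 → u 1 = P 1) : ¬ SolConnected d A b := by
  intro hc
  have key : ∀ z, Relation.ReflTransGen (SolStep d A b) Q z → z 0 = 0 := by
    intro z hz
    induction hz with
    | refl => exact hQ0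
    | tail _ hs ih =>
      rename_i u v _
      obtain ⟨hu, hv, hd⟩ := hs
      by_contra hne
      have h1 := H1 _ hv hne
      have h2 := H0 _ hu ih
      have : hammingDist u v = 2 := by
        unfold hammingDist
        have : (Finset.univ.filter fun i => u i ≠ v i) = Finset.univ := by
          ext i
          fin_cases i
          · simp [ih]; exact fun h => hne h.symm
          · simp [h1]; exact h2
        rw [this]; rfl
      omega
  exact hP0 (key P (hc Q P hQ hP))

theorem aux_min (d m : ℕ) (A : Matrix (Fin m) (Fin 2) ℝ) (P Q : Fin 2 → ℤ)
    (hP : InD d P) (hQ : InD d Q) (hP0 : P 0 ≠ 0) (hQ0 : Q 0 = 0)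
    (H0 : ∀ u : Fin 2 → ℤ, InD d u → u 0 = 0 → u 1 = P 1 →
      ∃ i, A i 0 * u 0 + A i 1 * u 1 < A i 0 * P 0 + A i 1 * P 1 ∧
        A i 0 * u 0 + A i 1 * u 1 < A i 0 * Q 0 + A i 1 * Q 1)
    (H1 : ∀ u : Fin 2 → ℤ, InD d u → u 0 ≠ 0 → u 1 ≠ P 1 →
      ∃ i, A i 0 * u 0 + A i 1 * u 1 < A i 0 * P 0 + A i 1 * P 1 ∧
        A i 0 * u 0 + A i 1 * u 1 < A i 0 * Q 0 + A i 1 * Q 1) :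
    ∃ b : Fin m → ℝ, ¬ SolConnected d A b := by
  refine ⟨fun i => min (A i 0 * P 0 + A i 1 * P 1) (A i 0 * Q 0 + A i 1 * Q 1),
    aux_disc d m A _ P Q ⟨hP, fun i => ?_⟩ ⟨hQ, fun i => ?_⟩ hP0 hQ0 ?_ ?_⟩
  · rw [Fin.sum_univ_two]; exact min_le_left _ _
  · rw [Fin.sum_univ_two]; exact min_le_right _ _
  · intro u hu h0 h1
    obtain ⟨i, hi⟩ := H0 u hu.1 h0 h1
    have := hu.2 i
    rw [Fin.sum_univ_two] at this
    exact absurd this (not_le.2 (lt_min hi.1 hi.2))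
  · intro u hu h0
    by_contra h1
    obtain ⟨i, hi⟩ := H1 u hu.1 h0 h1
    have := hu.2 i
    rw [Fin.sum_univ_two] at this
    exact absurd this (not_le.2 (lt_min hi.1 hi.2))

theorem aux_same (d : ℕ) (hd : 0 < d) (m : ℕ) (A : Matrix (Fin m) (Fin 2) ℝ) (p q : Fin m)
    (hp0 : 0 < A p 0) (hp1 : 0 < A p 1) (hq0 : A q 0 < 0) (hq1 : A q 1 < 0) :
    ∃ b : Fin m → ℝ, ¬ SolConnected d A b := by
  refine aux_min d m A ![1, 0] ![0, 1] ?_ ?_ (by simp) (by simp) ?_ ?_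
  · intro j; fin_cases j <;> simp; omega
  · intro j; fin_cases j <;> simp; omega
  · intro u hu h0 h1
    refine ⟨p, ?_⟩
    simp at h1
    simp [h0, h1, hp0, hp1]
  · intro u hu h0 h1
    refine ⟨q, ?_⟩
    simp at h1
    have a0 : (1 : ℤ) ≤ u 0 := by have := hu 0; omega
    have a1 : (1 : ℤ) ≤ u 1 := by have := hu 1; omega
    have a0 : (1 : ℝ) ≤ u 0 := by exact_mod_cast a0
    have a1 : (1 : ℝ) ≤ u 1 := by exact_mod_cast a1
    simp
    constructor <;> nlinarith

theorem aux_opp (d : ℕ) (hd : 0 < d) (m : ℕ) (A : Matrix (Fin m) (Fin 2) ℝ) (p q : Fin m)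
    (hp0 : 0 < A p 0) (hp1 : A p 1 < 0) (hq0 : A q 0 < 0) (hq1 : 0 < A q 1) :
    ∃ b : Fin m → ℝ, ¬ SolConnected d A b := by
  refine aux_min d m A ![1, (d : ℤ)] ![0, (d : ℤ) - 1] ?_ ?_ (by simp) (by simp) ?_ ?_
  · intro j; fin_cases j <;> simp; omega
  · intro j; fin_cases j <;> simp; omega
  · intro u hu h0 h1
    refine ⟨p, ?_⟩
    simp at h1
    simp [h0, h1]
    constructor <;> nlinarith
  · intro u hu h0 h1
    refine ⟨q, ?_⟩
    simp at h1
    have a0 : (1 : ℤ) ≤ u 0 := by have := hu 0; omega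
    have a1 : u 1 ≤ (d : ℤ) - 1 := by have := hu 1; omega
    have a0 : (1 : ℝ) ≤ u 0 := by exact_mod_cast a0
    have a1 : (u 1 : ℝ) ≤ (d : ℝ) - 1 := by exact_mod_cast a1
    simp
    constructor <;> nlinarith

theorem aux_eo {m : ℕ} (A : Matrix (Fin m) (Fin 2) ℝ) (σ : Equiv.Perm (Fin 2))
    (h : CanElim A (σ 0)) : HasEO A := by
  refine ⟨σ, fun t => ?_⟩
  fin_cases t
  · have : elimCols A ∅ = A := by
      ext i j; simp [elimCols]
    simpa [this] using h
  · left
    intro i _ j' hj'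
    have : j' = σ 0 := by
      obtain ⟨t, rfl⟩ := σ.surjective j'
      fin_cases t
      · rfl
      · exact absurd rfl hj'
    subst this
    simp [elimCols]

theorem stmt7 (d : ℕ) (hd : 0 < d) (m : ℕ) (A : Matrix (Fin m) (Fin 2) ℝ)
    (h : ¬ HasEO A) :
    ∃ b : Fin m → ℝ, ¬ SolConnected d A b := by
  have h0 : ¬ CanElim A 0 := fun hc => h (aux_eo A (Equiv.refl _) hc)
  have h1 : ¬ CanElim A 1 := fun hc => h (aux_eo A (Equiv.swap 0 1) (by simpa using hc))
  simp only [CanElim, not_or, Fin.forall_fin_two, not_forall] at h0 h1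
  simp at h0 h1
  obtain ⟨⟨p, hp, hp'⟩, ⟨q, hq, hq'⟩⟩ := h0
  obtain ⟨⟨r, hr, hr'⟩, ⟨s, hs, hs'⟩⟩ := h1
  have S := aux_same d hd m A
  have O := aux_opp d hd m A
  rcases lt_or_gt_of_ne hp' with a | a <;> rcases lt_or_gt_of_ne hq' with b | b <;>
  rcases lt_or_gt_of_ne hr' with c | c <;> rcases lt_or_gt_of_ne hs' with e | e <;>
  first
  | exact O p q hp a hq b
  | exact S p q hp a hq b
  | exact O p r hp a c hr
  | exact S p s hp a e hs
  | exact S r q c hr hq b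
  | exact O s q e hs hq b
end

section
/- Let A ∈ ℝ^{m×n} with m ≤ 3 or n ≤ 2. If for every b ∈ ℝ^m the solution graph of the integer linear system (A,b) over D = {0,...,d} is connected, then A has an elimination ordering. -/
open Finset

/-- Cut property: for any two points of the box and any predicate separating them there
is a crossing step staying above the row-wise minimum. -/
def Good (d : ℕ) {m n : ℕ} (A : Matrix (Fin m) (Fin n) ℝ) : Prop :=
  ∀ (u v : Fin n → ℤ) (P : (Fin n → ℤ) → Prop), InD d u → InD d v → P u → ¬ P v →
    ∃ x y : Fin n → ℤ, InD d x ∧ InD d y ∧ P x ∧ ¬ P y ∧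
      (∀ j j', x j ≠ y j → x j' ≠ y j' → j = j') ∧
      (∀ l, min (∑ j, A l j * (u j : ℝ)) (∑ j, A l j * (v j : ℝ)) ≤ ∑ j, A l j * (x j : ℝ)) ∧
      (∀ l, min (∑ j, A l j * (u j : ℝ)) (∑ j, A l j * (v j : ℝ)) ≤ ∑ j, A l j * (y j : ℝ))

theorem good_of_conn (d : ℕ) {m n : ℕ} (A : Matrix (Fin m) (Fin n) ℝ)
    (h : ∀ b : Fin m → ℝ, SolConnected d A b) : Good d A := by
  intro u v P hu hv hPu hPv
  by_contra hcon
  push Not at hcon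
  have hc := h (fun l => min (∑ j, A l j * (u j : ℝ)) (∑ j, A l j * (v j : ℝ))) u v
    ⟨hu, fun l => min_le_left _ _⟩ ⟨hv, fun l => min_le_right _ _⟩
  apply hPv
  suffices aux : ∀ w, Relation.ReflTransGen (SolStep d A
      (fun l => min (∑ j, A l j * (u j : ℝ)) (∑ j, A l j * (v j : ℝ)))) u w → P w from aux v hc
  intro w hw
  induction hw with
  | refl => exact hPu
  | tail _ hs ih =>
    rename_i x y _
    obtain ⟨hx, hy, hd⟩ := hs
    by_contra hPy
    have hdd : ∀ j j', x j ≠ y j → x j' ≠ y j' → j = j' := by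
      intro j j' h1 h2
      unfold hammingDist at hd
      exact Finset.card_le_one.1 hd.le j (by simpa using h1) j' (by simpa using h2)
    obtain ⟨l, hl⟩ := hcon x y hx.1 hy.1 ih hPy hdd hx.2
    exact absurd (hy.2 l) (not_le.2 hl)

theorem good_flip (d : ℕ) {m n : ℕ} (A : Matrix (Fin m) (Fin n) ℝ) (h : Good d A)
    (ε : Fin n → ℝ) (hε : ∀ j, ε j = 1 ∨ ε j = -1) : Good d (fun i j => ε j * A i j) := by
  classical
  let f : (Fin n → ℤ) → (Fin n → ℤ) := fun x j => if ε j = 1 then x j else d - x j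
  have hff : ∀ x, f (f x) = x := by
    intro x; funext j; simp only [f]; split_ifs <;> ring
  have hfD : ∀ x, InD d x → InD d (f x) := by
    intro x hx j
    have := hx j
    simp only [f]; split_ifs
    · exact this
    · constructor <;> omega
  have hsum : ∀ x l, ∑ j, A l j * (f x j : ℝ) =
      (∑ j, if ε j = 1 then 0 else A l j * d) + ∑ j, ε j * A l j * (x j : ℝ) := by
    intro x l
    rw [← Finset.sum_add_distrib]
    refine Finset.sum_congr rfl fun j _ => ?_
    simp only [f]
    split_ifs with h1
    · rw [h1]; ring
    · have := (hε j).resolve_left h1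
      rw [this]; push_cast; ring
  intro u v P hu hv hPu hPv
  obtain ⟨x, y, hx, hy, hPx, hPy, hxy, h1, h2⟩ :=
    h (f u) (f v) (fun z => P (f z)) (hfD u hu) (hfD v hv) (by simpa [hff] using hPu)
      (by simpa [hff] using hPv)
  refine ⟨f x, f y, hfD x hx, hfD y hy, hPx, hPy, ?_, ?_, ?_⟩
  · intro j j' a b
    apply hxy
    · intro e; apply a; simp only [f, e]
    · intro e; apply b; simp only [f, e]
  · intro l
    have := h1 l
    rw [← hff x, hsum, hsum, hsum, min_add_add_left] at this
    linarith
  · intro l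
    have := h2 l
    rw [← hff y, hsum, hsum, hsum, min_add_add_left] at this
    linarith

theorem sum_single_aux {n : ℕ} (a : Fin n → ℝ) (p : Fin n) :
    ∑ j, a j * ((Pi.single p 1 : Fin n → ℤ) j : ℝ) = a p := by
  rw [Finset.sum_eq_single p] <;> simp +contextual [Pi.single_apply]

theorem two_norm (d : ℕ) (hd : 0 < d) {m n : ℕ} (A : Matrix (Fin m) (Fin n) ℝ) (h : Good d A)
    (i k : Fin m) (p q : Fin n) (hpq : p ≠ q)
    (hall : ∀ j, (0 < A i j ∧ A k j < 0) ∨ (A i j ≤ 0 ∧ A k j ≤ 0))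
    (hp : 0 < A i p) (hq : 0 < A i q) : False := by
  classical
  let T := (univ : Finset (Fin n)).filter (fun j => 0 < A i j ∧ j ≠ p)
  have hT : T.Nonempty := ⟨q, by simp [T, hq, hpq.symm]⟩
  obtain ⟨r, hrT, hr⟩ := Finset.exists_max_image T (fun j => A k j) hT
  simp only [T, mem_filter, mem_univ, true_and] at hrT hr
  have hneg : ∀ j, 0 < A i j → A k j < 0 := by
    intro j hj; rcases hall j with h1 | h1 <;> linarith [h1.1, h1.2]
  have hnp : ∀ j, A k j ≤ 0 := by
    intro j; rcases hall j with h1 | h1 <;> linarith [h1.2]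
  have hD : ∀ s : Fin n, InD d (Pi.single s 1 : Fin n → ℤ) := by
    intro s j
    by_cases e : j = s
    · subst e; simp; omega
    · simp [Pi.single_apply, e]
  obtain ⟨x, y, hx, hy, hPx, hPy, hxy, h1, h2⟩ :=
    h (Pi.single p 1) (Pi.single r 1) (fun z => 1 ≤ z p) (hD p) (hD r) (by simp)
      (by simp [Pi.single_apply, hrT.2.symm])
  simp only [sum_single_aux] at h1 h2
  have hj : ∃ j, 0 < A i j ∧ 1 ≤ y j := by
    by_contra hcon
    push Not at hcon
    have hs : ∑ j, A i j * (y j : ℝ) ≤ 0 := by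
      apply Finset.sum_nonpos
      intro j _
      have h0 : (0:ℝ) ≤ y j := by exact_mod_cast (hy j).1
      rcases lt_or_ge 0 (A i j) with h3 | h3
      · have := hcon j h3
        have h4 : y j = 0 := by have := (hy j).1; omega
        simp [h4]
      · exact mul_nonpos_of_nonpos_of_nonneg h3 h0
    have := h2 i
    have h5 : 0 < min (A i p) (A i r) := lt_min hp hrT.1
    linarith
  obtain ⟨j, hj, hyj⟩ := hj
  have hjp : j ≠ p := by rintro rfl; exact hPy hyj
  have hxj : x j = y j := by
    by_contra hne
    exact hjp (hxy j p hne (by intro e; apply hPy; rw [← e]; exact hPx))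
  have hle : ∑ l, A k l * (x l : ℝ) ≤ A k p + A k j := by
    have e1 : ∑ l ∈ {p, j}, A k l * (x l : ℝ) = A k p * x p + A k j * x j :=
      Finset.sum_pair hjp.symm
    have e2 : ∑ l, A k l * (x l : ℝ) ≤ ∑ l ∈ {p, j}, A k l * (x l : ℝ) := by
      rw [← Finset.sum_add_sum_compl ({p, j} : Finset (Fin n))]
      have : ∑ l ∈ ({p, j} : Finset (Fin n))ᶜ, A k l * (x l : ℝ) ≤ 0 :=
        Finset.sum_nonpos fun l _ =>
          mul_nonpos_of_nonpos_of_nonneg (hnp l) (by exact_mod_cast (hx l).1)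
      linarith
    have a1 : (1:ℝ) ≤ x p := by exact_mod_cast hPx
    have a2 : (1:ℝ) ≤ x j := by rw [hxj]; exact_mod_cast hyj
    nlinarith [hnp p, hnp j]
  have h6 := hr j ⟨hj, hjp⟩
  have h7 := h1 k
  have h8 : A k p + A k j < min (A k p) (A k r) :=
    lt_min (by linarith [hneg j hj]) (by linarith [hneg p hp])
  linarith

theorem eps_aux (a b : ℝ) : ∃ ε : ℝ, (ε = 1 ∨ ε = -1) ∧
    ((0 < ε * a ∧ ε * b < 0) ∨ (ε * a ≤ 0 ∧ ε * b ≤ 0)) := by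
  rcases lt_trichotomy a 0 with h | h | h <;> rcases lt_trichotomy b 0 with h' | h' | h'
  all_goals first
    | (refine ⟨1, Or.inl rfl, ?_⟩; first | (left; constructor <;> linarith) | (right; constructor <;> linarith))
    | (refine ⟨-1, Or.inr rfl, ?_⟩; first | (left; constructor <;> linarith) | (right; constructor <;> linarith))

theorem two_rows (d : ℕ) (hd : 0 < d) {m n : ℕ} (A : Matrix (Fin m) (Fin n) ℝ) (h : Good d A)
    (i k : Fin m) (p q : Fin n) (hp : A i p * A k p < 0) (hq : A i q * A k q < 0) : p = q := by
  by_contra hpq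
  have := fun j => eps_aux (A i j) (A k j)
  choose ε hε hall using this
  have key : ∀ j, A i j * A k j < 0 → 0 < ε j * A i j := by
    intro j hj
    rcases hall j with h1 | h1
    · exact h1.1
    · exfalso
      have h2 := mul_nonneg_of_nonpos_of_nonpos h1.1 h1.2
      have h3 : ε j * ε j = 1 := by rcases hε j with e | e <;> rw [e] <;> norm_num
      have : ε j * A i j * (ε j * A k j) = A i j * A k j := by
        calc _ = (ε j * ε j) * (A i j * A k j) := by ring
          _ = _ := by rw [h3, one_mul]
      linarith
  exact two_norm d hd _ (good_flip d A h ε hε) i k p q hpq hall (key p hp) (key q hq)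

/-- One implication in the cyclic case. -/
theorem cyc_step {d n : ℕ} (a : Fin n → ℝ) (p r : Fin n) (x : Fin n → ℤ)
    (hx : InD d x) (hr : a r < 0) (hp : 0 < a p) (hall : ∀ j, j ≠ p → a j ≤ 0)
    (hs : min 0 (a p + a r) ≤ ∑ j, a j * (x j : ℝ)) (hxr : 1 ≤ x r) : 1 ≤ x p := by
  by_contra hcon
  have hx0 : x p = 0 := by have := (hx p).1; omega
  have e : ∑ j, a j * (x j : ℝ) ≤ a r * x r := by
    rw [← Finset.add_sum_erase univ _ (mem_univ r)]
    have : ∑ j ∈ univ.erase r, a j * (x j : ℝ) ≤ 0 := by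
      apply Finset.sum_nonpos
      intro j _
      by_cases hj : j = p
      · subst hj; simp [hx0]
      · exact mul_nonpos_of_nonpos_of_nonneg (hall j hj) (by exact_mod_cast (hx j).1)
    linarith
  have a1 : (1:ℝ) ≤ x r := by exact_mod_cast hxr
  have : a r < min 0 (a p + a r) := lt_min hr (by linarith)
  nlinarith

theorem cyc_norm (d : ℕ) (hd : 0 < d) {m n : ℕ} (A : Matrix (Fin m) (Fin n) ℝ) (h : Good d A)
    (r₁ r₂ r₃ : Fin m) (c₁ c₂ c₃ : Fin n) (h12 : c₁ ≠ c₂) (h13 : c₁ ≠ c₃) (h23 : c₂ ≠ c₃)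
    (p1 : 0 < A r₁ c₁) (p2 : 0 < A r₂ c₂) (p3 : 0 < A r₃ c₃)
    (n1 : A r₁ c₃ < 0) (n2 : A r₂ c₁ < 0) (n3 : A r₃ c₂ < 0)
    (z1 : A r₁ c₂ = 0) (z2 : A r₂ c₃ = 0) (z3 : A r₃ c₁ = 0)
    (a1 : ∀ j, j ≠ c₁ → A r₁ j ≤ 0) (a2 : ∀ j, j ≠ c₂ → A r₂ j ≤ 0)
    (a3 : ∀ j, j ≠ c₃ → A r₃ j ≤ 0) : False := by
  classical
  let v : Fin n → ℤ := Pi.single c₁ 1 + Pi.single c₂ 1 + Pi.single c₃ 1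
  have hv : InD d v := by
    intro j
    simp only [v, Pi.add_apply, Pi.single_apply]
    split_ifs <;> first | (exfalso; simp_all; done) | omega
  have hsum : ∀ l, ∑ j, A l j * (v j : ℝ) = A l c₁ + A l c₂ + A l c₃ := by
    intro l
    simp only [v, Pi.add_apply, Int.cast_add, mul_add, Finset.sum_add_distrib]
    rw [sum_single_aux, sum_single_aux, sum_single_aux]
  obtain ⟨x, y, hx, hy, hPx, hPy, hxy, h1, h2⟩ :=
    h v 0 (fun z => 1 ≤ z c₁) hv (by intro j; simp)
      (by simp [v, Pi.single_apply, h12, h13]) (by simp)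
  simp only [hsum, Pi.zero_apply, Int.cast_zero, mul_zero, Finset.sum_const_zero] at h1 h2
  have all3 : ∀ z : Fin n → ℤ, InD d z →
      (∀ l, min (A l c₁ + A l c₂ + A l c₃) 0 ≤ ∑ j, A l j * (z j : ℝ)) →
      (1 ≤ z c₃ → 1 ≤ z c₁) ∧ (1 ≤ z c₁ → 1 ≤ z c₂) ∧ (1 ≤ z c₂ → 1 ≤ z c₃) := by
    intro z hz hb
    refine ⟨cyc_step (A r₁) c₁ c₃ z hz n1 p1 a1 ?_, cyc_step (A r₂) c₂ c₁ z hz n2 p2 a2 ?_,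
      cyc_step (A r₃) c₃ c₂ z hz n3 p3 a3 ?_⟩
    · have := hb r₁; rw [z1, min_comm] at this; simpa using this
    · have := hb r₂; rw [z2, min_comm] at this; simpa [add_comm] using this
    · have := hb r₃; rw [z3, min_comm] at this; simpa [add_comm] using this
  obtain ⟨_, b2, b3⟩ := all3 x hx h1
  obtain ⟨d1, d2, d3⟩ := all3 y hy h2
  have f2 := b2 hPx
  have g2 : ¬ 1 ≤ y c₂ := fun e => hPy (d1 (d3 e))
  exact h12 (hxy c₁ c₂ (by intro e; rw [e] at hPx; exact hPy hPx)
    (by intro e; rw [e] at f2; exact g2 f2))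

theorem opp_of_ne (a b c : ℝ) (h : a * b < 0) (hc : c ≠ 0) : c * a < 0 ∨ c * b < 0 := by
  rcases lt_or_gt_of_ne hc with h1 | h1 <;> rcases mul_neg_iff.1 h with ⟨h2, h3⟩ | ⟨h2, h3⟩
  · left; nlinarith
  · right; nlinarith
  · right; nlinarith
  · left; nlinarith

theorem cyc_rows (d : ℕ) (hd : 0 < d) {m n : ℕ} (A : Matrix (Fin m) (Fin n) ℝ) (h : Good d A)
    (r₁ r₂ r₃ : Fin m) (c₁ c₂ c₃ : Fin n) (h12 : c₁ ≠ c₂) (h13 : c₁ ≠ c₃) (h23 : c₂ ≠ c₃)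
    (o1 : A r₁ c₁ * A r₂ c₁ < 0) (o2 : A r₂ c₂ * A r₃ c₂ < 0) (o3 : A r₃ c₃ * A r₁ c₃ < 0) :
    False := by
  have U := two_rows d hd A h
  have z1 : A r₁ c₂ = 0 := by
    by_contra hne
    rcases opp_of_ne _ _ _ o2 hne with e | e
    · exact h12 (U r₁ r₂ _ _ o1 e)
    · exact h23 (U r₁ r₃ _ _ e (by linarith))
  have z2 : A r₂ c₃ = 0 := by
    by_contra hne
    rcases opp_of_ne _ _ _ o3 hne with e | e
    · exact h23 (U r₂ r₃ _ _ o2 e)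
    · exact h13 (U r₂ r₁ _ _ (by linarith) e)
  have z3 : A r₃ c₁ = 0 := by
    by_contra hne
    rcases opp_of_ne _ _ _ o1 hne with e | e
    · exact h13 (U r₃ r₁ _ _ e o3)
    · exact h12 (U r₃ r₂ _ _ e (by linarith))
  have hE : ∀ j, ∃ ε : ℝ, (ε = 1 ∨ ε = -1) ∧
      (j ≠ c₁ → ε * A r₁ j ≤ 0) ∧ (j ≠ c₂ → ε * A r₂ j ≤ 0) ∧ (j ≠ c₃ → ε * A r₃ j ≤ 0) := by
    intro j
    by_cases e1 : j = c₁
    · subst e1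
      rcases mul_neg_iff.1 o1 with ⟨_, k⟩ | ⟨_, k⟩
      · exact ⟨1, Or.inl rfl, by simp, fun _ => by linarith, fun _ => by simp [z3]⟩
      · exact ⟨-1, Or.inr rfl, by simp, fun _ => by linarith, fun _ => by simp [z3]⟩
    by_cases e2 : j = c₂
    · subst e2
      rcases mul_neg_iff.1 o2 with ⟨_, k⟩ | ⟨_, k⟩
      · exact ⟨1, Or.inl rfl, fun _ => by simp [z1], by simp, fun _ => by linarith⟩
      · exact ⟨-1, Or.inr rfl, fun _ => by simp [z1], by simp, fun _ => by linarith⟩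
    by_cases e3 : j = c₃
    · subst e3
      rcases mul_neg_iff.1 o3 with ⟨_, k⟩ | ⟨_, k⟩
      · exact ⟨1, Or.inl rfl, fun _ => by linarith, fun _ => by simp [z2], by simp⟩
      · exact ⟨-1, Or.inr rfl, fun _ => by linarith, fun _ => by simp [z2], by simp⟩
    have w1 : 0 ≤ A r₁ j * A r₂ j := not_lt.1 fun e => e1 (U r₁ r₂ _ _ e o1)
    have w2 : 0 ≤ A r₂ j * A r₃ j := not_lt.1 fun e => e2 (U r₂ r₃ _ _ e o2)
    have w3 : 0 ≤ A r₃ j * A r₁ j := not_lt.1 fun e => e3 (U r₃ r₁ _ _ e o3)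
    by_cases hpos : 0 < A r₁ j ∨ 0 < A r₂ j ∨ 0 < A r₃ j
    · refine ⟨-1, Or.inr rfl, fun _ => ?_, fun _ => ?_, fun _ => ?_⟩ <;>
      · by_contra hc
        rcases hpos with k | k | k <;> nlinarith
    · push Not at hpos
      exact ⟨1, Or.inl rfl, fun _ => by linarith, fun _ => by linarith, fun _ => by linarith⟩
  choose ε hε ha1 ha2 ha3 using hE
  have hsq : ∀ j, ε j * ε j = 1 := by
    intro j; rcases hε j with e | e <;> rw [e] <;> norm_num
  have conv : ∀ r s j, A r j * A s j < 0 → ε j * A s j ≤ 0 → 0 < ε j * A r j ∧ ε j * A s j < 0 := by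
    intro r s j ho hle
    have : (ε j * A r j) * (ε j * A s j) < 0 := by
      have : ε j * A r j * (ε j * A s j) = A r j * A s j := by
        calc _ = (ε j * ε j) * (A r j * A s j) := by ring
          _ = _ := by rw [hsq, one_mul]
      linarith
    rcases mul_neg_iff.1 this with k | k
    · exact k
    · exact absurd k.2 (not_lt.2 hle)
  have k1 := conv _ _ _ o1 (ha2 c₁ h12)
  have k2 := conv _ _ _ o2 (ha3 c₂ h23)
  have k3 := conv _ _ _ o3 (ha1 c₃ h13.symm)
  exact cyc_norm d hd _ (good_flip d A h ε hε) r₁ r₂ r₃ c₁ c₂ c₃ h12 h13 h23 k1.1 k2.1 k3.1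
    k3.2 k1.2 k2.2 (by simp [z1]) (by simp [z2]) (by simp [z3]) ha1 ha2 ha3

theorem exists_stuck {m n : ℕ} (A : Matrix (Fin m) (Fin n) ℝ) (h : ¬ HasEO A) :
    ∃ J : Finset (Fin n), J ≠ univ ∧ ∀ j, j ∉ J → ¬ CanElim (elimCols A J) j := by
  classical
  by_contra hcon
  push Not at hcon
  apply h
  rcases Nat.eq_zero_or_pos n with hn | hn
  · subst hn
    exact ⟨1, fun t => t.elim0⟩
  have hpick : ∀ J : Finset (Fin n), ∃ j, J ≠ univ → j ∉ J ∧ CanElim (elimCols A J) j := by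
    intro J
    by_cases hJ : J = univ
    · exact ⟨⟨0, hn⟩, fun e => absurd hJ e⟩
    · obtain ⟨j, hj⟩ := hcon J hJ
      exact ⟨j, fun _ => hj⟩
  choose pick hp using hpick
  let J : ℕ → Finset (Fin n) := fun t => Nat.rec ∅ (fun _ K => insert (pick K) K) t
  have hJs : ∀ t, J (t+1) = insert (pick (J t)) (J t) := fun t => rfl
  have hJim : ∀ t, J t = (range t).image (fun s => pick (J s)) := by
    intro t
    induction t with
    | zero => rfl
    | succ t ih => rw [hJs, Finset.range_add_one, Finset.image_insert, ← ih]
  have hne : ∀ t, t < n → J t ≠ univ := by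
    intro t ht e
    have h1 : (J t).card ≤ t := by
      rw [hJim]; exact Finset.card_image_le.trans (by simp)
    rw [e] at h1
    simp at h1
    omega
  have hinj : Function.Injective (fun t : Fin n => pick (J t)) := by
    have key : ∀ s t : Fin n, s < t → pick (J s) ≠ pick (J t) := by
      intro s t hst e
      apply (hp _ (hne t t.2)).1
      rw [← e]
      have : pick (J s) ∈ (range (t : ℕ)).image (fun s => pick (J s)) :=
        Finset.mem_image.2 ⟨s, Finset.mem_range.2 hst, rfl⟩
      rwa [← hJim] at this
    intro s t e
    rcases lt_trichotomy s t with k | k | k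
    · exact absurd e (key s t k)
    · exact k
    · exact absurd e.symm (key t s k)
  refine ⟨Equiv.ofBijective _ (Finite.injective_iff_bijective.1 hinj), fun t => ?_⟩
  have : (univ.filter (fun t' => t' < t)).image
      (Equiv.ofBijective _ (Finite.injective_iff_bijective.1 hinj)) = J t := by
    conv_rhs => rw [hJim]
    ext j
    simp only [mem_image, mem_filter, mem_univ, true_and, Equiv.ofBijective_apply, mem_range]
    constructor
    · rintro ⟨a, ha, rfl⟩; exact ⟨a, ha, rfl⟩
    · rintro ⟨a, ha, rfl⟩; exact ⟨⟨a, ha.trans t.2⟩, ha, rfl⟩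
  rw [this]
  exact (hp _ (hne t t.2)).2

theorem stmt11 (d : ℕ) (hd : 0 < d) (m n : ℕ) (hmn : m ≤ 3 ∨ n ≤ 2)
    (A : Matrix (Fin m) (Fin n) ℝ)
    (h : ∀ b : Fin m → ℝ, SolConnected d A b) :
    HasEO A := by
  classical
  by_contra hEO
  have hG := good_of_conn d A h
  have U := two_rows d hd A hG
  obtain ⟨J, hJ, hst⟩ := exists_stuck A hEO
  have hst' : ∀ j, j ∉ J → (∃ i, 0 < A i j ∧ ∃ j', j' ∉ J ∧ j' ≠ j ∧ A i j' ≠ 0) ∧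
      (∃ i, A i j < 0 ∧ ∃ j', j' ∉ J ∧ j' ≠ j ∧ A i j' ≠ 0) := by
    intro j hj
    have := hst j hj
    unfold CanElim at this
    push Not at this
    obtain ⟨⟨i, hi, j', hj', e⟩, ⟨k, hk, j'', hj'', e'⟩⟩ := this
    simp only [elimCols, hj, if_false, ne_eq, ite_eq_left_iff, not_forall] at hi e hk e'
    obtain ⟨e1, e2⟩ := e
    obtain ⟨e3, e4⟩ := e'
    exact ⟨⟨i, hi, j', e1, hj', e2⟩, ⟨k, hk, j'', e3, hj'', e4⟩⟩
  obtain ⟨j, hj⟩ : ∃ j, j ∉ J := by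
    by_contra hc; push Not at hc; exact hJ (Finset.eq_univ_iff_forall.2 hc)
  obtain ⟨⟨a, ha, j1, hj1, hj1j, ha1⟩, ⟨b, hb, j2, hj2, hj2j, hb2⟩⟩ := hst' j hj
  have oab : A a j * A b j < 0 := mul_neg_of_pos_of_neg ha hb
  rcases hmn with hm | hn
  · -- at most three rows
    have hab : a ≠ b := by rintro rfl; linarith
    -- any opposite pair in a column of the stuck set different from j involves a third row
    have opp : ∀ l, l ∉ J → ∃ p q, A p l * A q l < 0 := by
      intro l hl
      obtain ⟨⟨p, hp, _⟩, ⟨q, hq, _⟩⟩ := hst' l hl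
      exact ⟨p, q, mul_neg_of_pos_of_neg hp hq⟩
    have sym : ∀ p q l, A p l * A q l < 0 → A q l * A p l < 0 := by
      intro p q l; rw [mul_comm]; exact id
    have noself : ∀ p l, ¬ A p l * A p l < 0 := fun p l => not_lt.2 (mul_self_nonneg _)
    -- third row
    obtain ⟨c, hc⟩ : ∃ c, c ≠ a ∧ c ≠ b := by
      obtain ⟨p, q, hpq⟩ := opp j1 hj1
      by_contra hcon
      push Not at hcon
      have hp := hcon p
      have hq := hcon q
      by_cases h1 : p = a <;> by_cases h2 : q = a
      · subst h1; subst h2; exact noself _ _ hpq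
      · subst h1; rw [hq h2] at hpq; exact hj1j (U _ _ _ _ hpq oab)
      · subst h2; rw [hp h1] at hpq; exact hj1j (U _ _ _ _ (sym _ _ _ hpq) oab)
      · rw [hp h1, hq h2] at hpq; exact noself _ _ hpq
    have three : ∀ r, r = a ∨ r = b ∨ r = c := by
      intro r
      have := a.2; have := b.2; have := c.2; have := r.2
      simp only [Fin.ext_iff, ne_eq] at *
      omega
    have opp3 : ∀ l, l ∉ J → l ≠ j → A a l * A c l < 0 ∨ A b l * A c l < 0 := by
      intro l hl hlj
      obtain ⟨p, q, hpq⟩ := opp l hl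
      have hn : ¬ A a l * A b l < 0 := fun e => hlj (U _ _ _ _ e oab)
      have hn' : ¬ A b l * A a l < 0 := fun e => hn (sym _ _ _ e)
      rcases three p with rfl | rfl | rfl <;> rcases three q with rfl | rfl | rfl
      · exact absurd hpq (noself _ _)
      · exact absurd hpq hn
      · exact Or.inl hpq
      · exact absurd hpq hn'
      · exact absurd hpq (noself _ _)
      · exact Or.inr hpq
      · exact Or.inl (sym _ _ _ hpq)
      · exact Or.inr (sym _ _ _ hpq)
      · exact absurd hpq (noself _ _)
    have oac : A a j1 * A c j1 < 0 := by
      rcases opp3 j1 hj1 hj1j with e | e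
      · exact e
      · rcases opp_of_ne _ _ _ e ha1 with e' | e'
        · exact absurd (U _ _ _ _ e' oab) hj1j
        · exact e'
    have obc : A b j2 * A c j2 < 0 := by
      rcases opp3 j2 hj2 hj2j with e | e
      · rcases opp_of_ne _ _ _ e hb2 with e' | e'
        · exact absurd (U _ _ _ _ (sym _ _ _ e') oab) hj2j
        · exact e'
      · exact e
    by_cases h12 : j1 = j2
    · subst h12
      -- row c has another nonzero entry
      have : ∃ j', j' ∉ J ∧ j' ≠ j1 ∧ A c j' ≠ 0 := by
        obtain ⟨⟨p, hp, hp'⟩, ⟨q, hq, hq'⟩⟩ := hst' j1 hj1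
        rcases mul_neg_iff.1 oac with ⟨k1, k2⟩ | ⟨k1, k2⟩
        · rcases three q with rfl | rfl | rfl
          · linarith
          · nlinarith
          · exact hq'
        · rcases three p with rfl | rfl | rfl
          · linarith
          · nlinarith
          · exact hp'
      obtain ⟨j3, hj3, h31, hc3⟩ := this
      by_cases h3 : j3 = j
      · subst h3
        rcases opp_of_ne _ _ _ oab hc3 with e | e
        · exact h31 (U _ _ _ _ (sym _ _ _ e) oac)
        · exact h31 (U _ _ _ _ (sym _ _ _ e) obc)
      · rcases opp3 j3 hj3 h3 with e | e
        · exact h31 (U _ _ _ _ e oac)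
        · exact h31 (U _ _ _ _ e obc)
    · exact cyc_rows d hd A hG a b c j j2 j1 hj2j.symm hj1j.symm (Ne.symm h12) oab obc
        (sym _ _ _ oac)
  · -- at most two columns
    have two : ∀ l, l = j ∨ l = j1 := by
      intro l
      have := j.2; have := j1.2; have := l.2
      simp only [Fin.ext_iff, ne_eq] at *
      omega
    have e2 : j2 = j1 := (two j2).resolve_left hj2j
    subst e2
    obtain ⟨⟨p, hp, p', _, hp1, hp2⟩, ⟨q, hq, q', _, hq1, hq2⟩⟩ := hst' j2 hj2
    rw [(two p').resolve_right hp1] at hp2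
    rw [(two q').resolve_right hq1] at hq2
    have hn : ¬ A a j2 * A b j2 < 0 := fun e => hj2j (U _ _ _ _ e oab)
    have fin : ∀ r, A r j ≠ 0 → A r j2 * A a j2 < 0 → A r j2 * A b j2 < 0 → False := by
      intro r hr k1 k2
      rcases opp_of_ne _ _ _ oab hr with e | e
      · exact hj2j (U _ _ _ _ k1 e)
      · exact hj2j (U _ _ _ _ k2 e)
    rcases lt_or_gt_of_ne ha1 with k | k <;> rcases lt_or_gt_of_ne hb2 with k' | k'
    · exact fin p hp2 (mul_neg_of_pos_of_neg hp k) (mul_neg_of_pos_of_neg hp k')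
    · exact hn (mul_neg_of_neg_of_pos k k')
    · exact hn (mul_neg_of_pos_of_neg k k')
    · exact fin q hq2 (mul_neg_of_neg_of_pos hq k) (mul_neg_of_neg_of_pos hq k')
end
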